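/- Let S be a central simple algebra over a field Q and let R ⊆ S be a subring with center Z(R). Then R is an order of S if and only if Z(R) is an integral domain whose field of fractions is Q and R·Q = S. -/

import Mathlib

/-- `R` is an order in `S`: every `x ∈ S` can be written as `a b⁻¹` and as
`c⁻¹ d` with `a, b, c, d ∈ R` (the inverses taken in `S`). -/
def IsOrderIn {S : Type*} [Ring S] (R : Subring S) : Prop :=
  ∀ x : S,
    (∃ a b bi : S, a ∈ R ∧ b ∈ R ∧ b * bi = 1 ∧ bi * b = 1 ∧ x = a * bi) ∧
    (∃ c d ci : S, c ∈ R ∧ d ∈ R ∧ c * ci = 1 ∧ ci * c = 1 ∧ x = ci * d)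

open TensorProduct in
lemma aux_density {Q S : Type*} [Field Q] [Ring S] [Algebra Q S]
    [FiniteDimensional Q S] [IsSimpleRing S]
    (hcen : Subring.center S = (algebraMap Q S).range) (f : S →ₗ[Q] S) :
    ∃ t : S ⊗[Q] Sᵐᵒᵖ, AlgHom.mulLeftRight Q S t = f := by
  classical
  let B : Subalgebra Q (Module.End Q S) := (AlgHom.mulLeftRight Q S).range
  have memB (a b : S) : AlgHom.mulLeftRight Q S (a ⊗ₜ MulOpposite.op b) ∈ B := ⟨_, rfl⟩
  have smulB (a b x : S) :
      (⟨_, memB a b⟩ : B) • x = a * x * b := by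
    change AlgHom.mulLeftRight Q S (a ⊗ₜ MulOpposite.op b) x = _
    simp
  have : IsSimpleModule B S := by
    rw [isSimpleModule_iff_toSpanSingleton_surjective]
    refine ⟨inferInstance, ?_⟩
    intro x hx y
    let N : Submodule B S := LinearMap.range (LinearMap.toSpanSingleton B S x)
    have hxN : x ∈ N := ⟨1, by simp⟩
    let I : TwoSidedIdeal S := TwoSidedIdeal.mk' (N : Set S) N.zero_mem
      (fun h1 h2 => N.add_mem h1 h2) (fun {a} h => by
        have := N.smul_mem ⟨_, memB (-1) 1⟩ h
        rwa [smulB, mul_one, neg_one_mul] at this)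
      (fun {a b} h => by
        have := N.smul_mem ⟨_, memB a 1⟩ h
        rwa [smulB, mul_one] at this)
      (fun {a b} h => by
        have := N.smul_mem ⟨_, memB 1 b⟩ h
        rwa [smulB, one_mul] at this)
    have hI : I = ⊤ := by
      rcases eq_bot_or_eq_top I with h | h
      · exfalso
        have hxI : x ∈ I := by simpa [I] using hxN
        rw [h] at hxI
        exact hx (by simpa using hxI)
      · exact h
    have hy : y ∈ I := by rw [hI]; trivial
    have hyN : y ∈ N := by simpa [I] using hy
    exact hyN
  have key (g : Module.End B S) : ∃ k : Q, ∀ x, g x = k • x := by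
    have h1 (a x b : S) : g (a * x * b) = a * g x * b := by
      rw [← smulB, g.map_smul, smulB]
    have hc : g 1 ∈ Subring.center S := by
      rw [Subring.mem_center_iff]
      intro x
      have e1 := h1 x 1 1
      have e2 := h1 1 1 x
      simp only [mul_one, one_mul] at e1 e2
      rw [← e1, ← e2]
    rw [hcen] at hc
    obtain ⟨k, hk⟩ := hc
    refine ⟨k, fun x => ?_⟩
    have e2 := h1 1 1 x
    simp only [mul_one, one_mul] at e2
    rw [e2, ← hk, Algebra.smul_def]
  let F : Module.End (Module.End B S) S :=
    { toFun := f
      map_add' := f.map_add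
      map_smul' := by
        intro g x
        obtain ⟨k, hk⟩ := key g
        simp only [Module.End.smul_def, hk, RingHom.id_apply, map_smul] }
  let e := Module.finBasis Q S
  obtain ⟨r, hr⟩ := jacobson_density (R := B) F (Finset.univ.image e)
  obtain ⟨t, ht⟩ := r.2
  refine ⟨t, e.ext fun i => ?_⟩
  have := hr (e i) (by simp)
  exact (congrArg (fun (l : Module.End Q S) => l (e i)) ht).trans this.symm

lemma aux_left {S : Type*} [Ring S] {R : Subring S} (h : IsOrderIn R) (x : S) :
    ∃ c : Sˣ, (c : S) ∈ R ∧ (c : S) * x ∈ R := by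
  obtain ⟨c, d, ci, hc, hd, h1, h2, rfl⟩ := (h x).2
  exact ⟨⟨c, ci, h1, h2⟩, hc, by simpa [← mul_assoc, h1] using hd⟩

lemma aux_right {S : Type*} [Ring S] {R : Subring S} (h : IsOrderIn R) (x : S) :
    ∃ c : Sˣ, (c : S) ∈ R ∧ x * (c : S) ∈ R := by
  obtain ⟨c, d, ci, hc, hd, h1, h2, rfl⟩ := (h x).1
  exact ⟨⟨d, ci, h1, h2⟩, hd, by simpa [mul_assoc, h2] using hc⟩

lemma aux_mergeL {S : Type*} [Ring S] {R : Subring S} (h : IsOrderIn R) (c₁ c₂ : Sˣ)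
    (h₁ : (c₁ : S) ∈ R) :
    ∃ c : Sˣ, (c : S) ∈ R ∧ ∃ u ∈ R, ∃ v ∈ R, (c : S) = u * c₁ ∧ (c : S) = v * c₂ := by
  obtain ⟨u, hu, hv⟩ := aux_left h ((c₁ * c₂⁻¹ : Sˣ) : S)
  exact ⟨u * c₁, by simpa using R.mul_mem hu h₁, u, hu, _, hv, by simp, by simp [mul_assoc]⟩

lemma aux_mergeR {S : Type*} [Ring S] {R : Subring S} (h : IsOrderIn R) (c₁ c₂ : Sˣ)
    (h₁ : (c₁ : S) ∈ R) :
    ∃ c : Sˣ, (c : S) ∈ R ∧ ∃ u ∈ R, ∃ v ∈ R, (c : S) = c₁ * u ∧ (c : S) = c₂ * v := by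
  obtain ⟨u, hu, hv⟩ := aux_right h ((c₂⁻¹ * c₁ : Sˣ) : S)
  exact ⟨c₁ * u, by simpa using R.mul_mem h₁ hu, u, hu, _, hv, by simp, by simp [← mul_assoc]⟩

lemma aux_merge {S : Type*} [Ring S] {R : Subring S} (h : IsOrderIn R) (c₁ c₂ b₁ b₂ : Sˣ)
    (h₁ : (c₁ : S) ∈ R) (h₂ : (b₁ : S) ∈ R) :
    ∃ c b : Sˣ, (c : S) ∈ R ∧ (b : S) ∈ R ∧
      ∀ y, (((c₁ : S) * y * b₁ ∈ R) → ((c : S) * y * b ∈ R)) ∧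
        (((c₂ : S) * y * b₂ ∈ R) → ((c : S) * y * b ∈ R)) := by
  obtain ⟨c, hc, u, hu, v, hv, e1, e2⟩ := aux_mergeL h c₁ c₂ h₁
  obtain ⟨b, hb, u', hu', v', hv', e1', e2'⟩ := aux_mergeR h b₁ b₂ h₂
  refine ⟨c, b, hc, hb, fun y => ⟨fun hy => ?_, fun hy => ?_⟩⟩
  · rw [e1, e1']
    have := R.mul_mem (R.mul_mem hu hy) hu'
    simpa only [mul_assoc] using this
  · rw [e2, e2']
    have := R.mul_mem (R.mul_mem hv hy) hv'
    simpa only [mul_assoc] using this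

open TensorProduct in
lemma aux_den {Q S : Type*} [Field Q] [Ring S] [Algebra Q S]
    [FiniteDimensional Q S] [IsSimpleRing S]
    (hcen : Subring.center S = (algebraMap Q S).range) {R : Subring S} (h : IsOrderIn R)
    (f : S →ₗ[Q] S) :
    ∃ c b : Sˣ, (c : S) ∈ R ∧ (b : S) ∈ R ∧ ∀ x ∈ R, (c : S) * f x * b ∈ R := by
  obtain ⟨t, rfl⟩ := aux_density hcen f
  induction t using TensorProduct.induction_on with
  | zero => exact ⟨1, 1, by simp [R.one_mem], by simp [R.one_mem], by simp [R.zero_mem]⟩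
  | tmul a b =>
    obtain ⟨c, hc, hca⟩ := aux_left h a
    obtain ⟨d, hd, hdb⟩ := aux_right h b.unop
    refine ⟨c, d, hc, hd, fun x hx => ?_⟩
    have := R.mul_mem (R.mul_mem hca hx) hdb
    rw [AlgHom.mulLeftRight_apply]
    simpa only [mul_assoc] using this
  | add t₁ t₂ ih₁ ih₂ =>
    obtain ⟨c₁, b₁, hc₁, hb₁, H₁⟩ := ih₁
    obtain ⟨c₂, b₂, hc₂, hb₂, H₂⟩ := ih₂
    obtain ⟨c, b, hc, hb, H⟩ := aux_merge h c₁ c₂ b₁ b₂ hc₁ hb₁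
    refine ⟨c, b, hc, hb, fun x hx => ?_⟩
    rw [map_add, LinearMap.add_apply, mul_add, add_mul]
    exact R.add_mem ((H _).1 (H₁ x hx)) ((H _).2 (H₂ x hx))

lemma aux_dens {Q S : Type*} [Field Q] [Ring S] [Algebra Q S]
    [FiniteDimensional Q S] [IsSimpleRing S]
    (hcen : Subring.center S = (algebraMap Q S).range) {R : Subring S} (h : IsOrderIn R)
    {ι : Type*} (s : Finset ι) (f : ι → S →ₗ[Q] S) :
    ∃ c b : Sˣ, (c : S) ∈ R ∧ (b : S) ∈ R ∧ ∀ i ∈ s, ∀ x ∈ R, (c : S) * f i x * b ∈ R := by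
  classical
  induction s using Finset.induction_on with
  | empty => exact ⟨1, 1, by simp [R.one_mem], by simp [R.one_mem], by simp⟩
  | insert j s hj ih =>
    obtain ⟨c₁, b₁, hc₁, hb₁, H₁⟩ := ih
    obtain ⟨c₂, b₂, hc₂, hb₂, H₂⟩ := aux_den hcen h (f j)
    obtain ⟨c, b, hc, hb, H⟩ := aux_merge h c₁ c₂ b₁ b₂ hc₁ hb₁
    refine ⟨c, b, hc, hb, fun i hi x hx => ?_⟩
    rcases Finset.mem_insert.1 hi with rfl | hi
    · exact (H _).2 (H₂ x hx)
    · exact (H _).1 (H₁ i hi x hx)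

/-- scalars `k` with `k d ^ n ∈ R` -/
def auxP (Q : Type*) {S : Type*} [Field Q] [Ring S] [Algebra Q S] (R : Subring S) (d : S)
    (n : ℕ) : AddSubgroup Q where
  carrier := {k | algebraMap Q S k * d ^ n ∈ R}
  zero_mem' := by simp [R.zero_mem]
  add_mem' := by
    intro a b ha hb
    simp only [Set.mem_ofPred_eq, map_add, add_mul] at *
    exact R.add_mem ha hb
  neg_mem' := by
    intro a ha
    simp only [Set.mem_ofPred_eq, map_neg, neg_mul] at *
    exact R.neg_mem ha

lemma auxP_mul {Q S : Type*} [Field Q] [Ring S] [Algebra Q S] {R : Subring S} {d : S}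
    {m n : ℕ} {a b : Q} (ha : a ∈ auxP Q R d m) (hb : b ∈ auxP Q R d n) :
    a * b ∈ auxP Q R d (m + n) := by
  change algebraMap Q S a * d ^ m ∈ R at ha
  change algebraMap Q S b * d ^ n ∈ R at hb
  change algebraMap Q S (a * b) * d ^ (m + n) ∈ R
  have := R.mul_mem ha hb
  have e : algebraMap Q S (a * b) * d ^ (m + n) =
      algebraMap Q S a * d ^ m * (algebraMap Q S b * d ^ n) := by
    rw [map_mul, pow_add, mul_assoc, mul_assoc, ← mul_assoc (d ^ m),
      ← Algebra.commutes b (d ^ m), mul_assoc]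
  rwa [e]

lemma auxP_charpoly {Q S : Type*} [Field Q] [Ring S] [Algebra Q S] {R : Subring S} {d : S}
    (hd : d ∈ R) {N : ℕ} (M : Matrix (Fin N) (Fin N) Q)
    (hM : ∀ i j, M i j ∈ auxP Q R d 1) (k : ℕ) :
    M.charpoly.coeff k ∈ auxP Q R d N := by
  have h1 : (1 : Q) ∈ auxP Q R d 1 := by
    change algebraMap Q S 1 * d ^ 1 ∈ R
    simpa using hd
  have hent (i j : Fin N) (k : ℕ) : (M.charmatrix i j).coeff k ∈ auxP Q R d 1 := by
    rw [Matrix.charmatrix_apply, Polynomial.coeff_sub]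
    refine AddSubgroup.sub_mem _ ?_ ?_
    · rw [Matrix.diagonal_apply]
      split_ifs
      · rw [Polynomial.coeff_X]
        split_ifs
        · exact h1
        · exact zero_mem _
      · simp [zero_mem]
    · rw [Polynomial.coeff_C]
      split_ifs
      · exact hM i j
      · exact zero_mem _
  have hprod (σ : Equiv.Perm (Fin N)) (s : Finset (Fin N)) : ∀ k,
      (∏ i ∈ s, M.charmatrix (σ i) i).coeff k ∈ auxP Q R d s.card := by
    induction s using Finset.induction_on with
    | empty =>
      intro k
      simp only [Finset.prod_empty, Finset.card_empty, Polynomial.coeff_one]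
      split_ifs
      · change algebraMap Q S 1 * d ^ 0 ∈ R
        simp [R.one_mem]
      · exact zero_mem _
    | insert j s hj ih =>
      intro k
      rw [Finset.prod_insert hj, Finset.card_insert_of_notMem hj, add_comm s.card,
        Polynomial.coeff_mul]
      exact sum_mem fun p _ => auxP_mul (hent _ _ _) (ih _)
  rw [Matrix.charpoly, Matrix.det_apply, Polynomial.finsetSum_coeff]
  refine sum_mem fun σ _ => ?_
  have := hprod σ Finset.univ k
  rw [Finset.card_univ, Fintype.card_fin] at this
  rcases Int.units_eq_one_or (Equiv.Perm.sign σ) with h | h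
  · simpa [h] using this
  · simpa [h] using this

lemma aux_span {Q S : Type*} [Field Q] [Ring S] [Algebra Q S]
    [FiniteDimensional Q S] {R : Subring S} (h : IsOrderIn R) :
    Submodule.span Q (R : Set S) = ⊤ := by
  let A : Subalgebra Q S := Algebra.adjoin Q (R : Set S)
  have hA : Subalgebra.toSubmodule A = Submodule.span Q (R : Set S) := by
    have := Algebra.adjoin_eq_span Q (R : Set S)
    rw [this]
    congr 1
    have : Submonoid.closure (R : Set S) = R.toSubmonoid := Submonoid.closure_eq R.toSubmonoid
    rw [this]; rfl
  rw [← hA, eq_top_iff]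
  intro x _
  obtain ⟨c, hc, hx⟩ := aux_right h x
  have hcA : (c : S) ∈ A := Algebra.subset_adjoin hc
  have hxA : x * (c : S) ∈ A := Algebra.subset_adjoin hx
  have hinj : Function.Injective (LinearMap.mulLeft Q (⟨c, hcA⟩ : A)) := by
    intro u v huv
    have : (c : S) * u = c * v := congrArg Subtype.val huv
    exact Subtype.ext (by simpa using this)
  obtain ⟨u, hu⟩ := LinearMap.surjective_of_injective hinj 1
  have hu' : (c : S) * u = 1 := congrArg Subtype.val hu
  have : x = (x * c) * u := by rw [mul_assoc, hu', mul_one]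
  change x ∈ A
  rw [this]
  exact A.mul_mem hxA u.2

lemma aux_basis {Q S : Type*} [Field Q] [Ring S] [Algebra Q S]
    [FiniteDimensional Q S] {R : Subring S} (h : Submodule.span Q (R : Set S) = ⊤) :
    ∃ (N : ℕ) (e : Module.Basis (Fin N) Q S), ∀ i, e i ∈ R := by
  let b := Module.Basis.ofSpan h.ge
  have : Finite _ := Module.Finite.finite_basis b
  obtain ⟨N, ⟨g⟩⟩ := @Finite.exists_equiv_fin _ this
  refine ⟨N, b.reindex g, fun i => ?_⟩
  have := Module.Basis.ofSpan_subset h.ge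
  rw [Module.Basis.reindex_apply]
  exact this ⟨_, rfl⟩

lemma aux_frac {Q S : Type*} [Field Q] [Ring S] [Algebra Q S]
    [FiniteDimensional Q S] [IsSimpleRing S]
    (hcen : Subring.center S = (algebraMap Q S).range) {R : Subring S} (h : IsOrderIn R) (q : Q) :
    ∃ k : Q, k ≠ 0 ∧ algebraMap Q S k ∈ R ∧ algebraMap Q S (q * k) ∈ R := by
  obtain ⟨N, e, he⟩ := aux_basis (aux_span (Q := Q) h)
  obtain ⟨c, b, hc, hb, H⟩ := aux_dens hcen h (Finset.univ : Finset (Option (Fin N)))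
    (fun o => o.elim (q • LinearMap.id) (fun i => (Algebra.linearMap Q S).comp (e.coord i)))
  have Hq : algebraMap Q S q * (c * b : S) ∈ R := by
    have := H none (by simp) 1 R.one_mem
    simp only [Option.elim_none, LinearMap.smul_apply, LinearMap.id_apply] at this
    rw [Algebra.smul_def, mul_one] at this
    rwa [← mul_assoc, Algebra.commutes]
  have Hi (i : Fin N) (x : S) (hx : x ∈ R) : e.repr x i ∈ auxP Q R (c * b : S) 1 := by
    have := H (some i) (by simp) x hx
    simp only [Option.elim_some, LinearMap.comp_apply, Algebra.linearMap_apply,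
      Module.Basis.coord_apply] at this
    change algebraMap Q S _ * _ ^ 1 ∈ R
    rwa [pow_one, ← mul_assoc, Algebra.commutes]
  have hd : (c * b : S) ∈ R := R.mul_mem hc hb
  set d : S := (c * b : S) with hddef
  have hdu : IsUnit d := (c * b).isUnit
  let j : S := d ^ (N + 1)
  have hj : j ∈ R := R.pow_mem hd _
  let M := Algebra.leftMulMatrix e j
  have hM : ∀ i k, M i k ∈ auxP Q R d 1 := by
    intro i k
    change Algebra.leftMulMatrix e j i k ∈ _
    rw [Algebra.leftMulMatrix_eq_repr_mul]
    exact Hi _ _ (R.mul_mem hj (he k))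
  have hcoef := auxP_charpoly hd M hM
  have hCH : Polynomial.aeval j M.charpoly = 0 := by
    apply Algebra.leftMulMatrix_injective e
    rw [map_zero, ← Polynomial.aeval_algHom_apply]
    exact Matrix.aeval_self_charpoly M
  have hdet : M.charpoly.coeff 0 ≠ 0 := by
    have hu : IsUnit M := (hdu.pow (N + 1)).map (Algebra.leftMulMatrix e)
    have hu2 : IsUnit M.det := (Matrix.isUnit_iff_isUnit_det M).1 hu
    rw [Matrix.det_eq_sign_charpoly_coeff] at hu2
    intro h0
    rw [h0, mul_zero] at hu2
    exact not_isUnit_zero hu2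
  rw [Polynomial.aeval_eq_sum_range, Finset.sum_range_succ', pow_zero, Algebra.smul_def,
    mul_one] at hCH
  have hterm (i : ℕ) : ∃ r ∈ R, M.charpoly.coeff (i + 1) • j ^ (i + 1) = r * d := by
    refine ⟨algebraMap Q S (M.charpoly.coeff (i+1)) * d ^ N * j ^ i,
      R.mul_mem (hcoef _) (R.pow_mem hj _), ?_⟩
    have : j ^ (i + 1) = d ^ N * j ^ i * d := by
      simp only [j, ← pow_mul, ← pow_add, ← pow_succ]
      congr 1
      ring
    rw [Algebra.smul_def, this]
    simp only [mul_assoc]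
  choose r hr hr' using hterm
  have hk : algebraMap Q S (M.charpoly.coeff 0) =
      -((∑ i ∈ Finset.range M.charpoly.natDegree, r i) * d) := by
    rw [Finset.sum_mul, ← Finset.sum_congr rfl fun i _ => hr' i]
    exact eq_neg_of_add_eq_zero_right hCH
  have hsum : (∑ i ∈ Finset.range M.charpoly.natDegree, r i) ∈ R := sum_mem fun i _ => hr i
  refine ⟨M.charpoly.coeff 0, hdet, ?_, ?_⟩
  · rw [hk]
    exact R.neg_mem (R.mul_mem hsum hd)
  · rw [map_mul, hk, mul_neg, ← mul_assoc, Algebra.commutes, mul_assoc]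
    exact R.neg_mem (R.mul_mem hsum Hq)

theorem statement2 {Q S : Type*} [Field Q] [Ring S] [Algebra Q S]
    [FiniteDimensional Q S] [IsSimpleRing S]
    (hcen : Subring.center S = (algebraMap Q S).range)
    (R : Subring S) :
    IsOrderIn R ↔
      ((∀ z w : S, z ∈ R → w ∈ R → (∀ r ∈ R, z * r = r * z) → (∀ r ∈ R, w * r = r * w) →
          z * w = 0 → z = 0 ∨ w = 0) ∧
        (∀ z ∈ R, (∀ r ∈ R, z * r = r * z) → z ∈ (algebraMap Q S).range) ∧
        (∀ q : Q, ∃ z w : S, z ∈ R ∧ w ∈ R ∧ (∀ r ∈ R, z * r = r * z) ∧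
          (∀ r ∈ R, w * r = r * w) ∧ w ≠ 0 ∧ algebraMap Q S q * w = z) ∧
        Submodule.span Q (R : Set S) = ⊤) := by
  have hinj : Function.Injective (algebraMap Q S) := FaithfulSMul.algebraMap_injective Q S
  constructor
  · intro h
    have hspan := aux_span (Q := Q) h
    have hcent : ∀ z ∈ R, (∀ r ∈ R, z * r = r * z) → z ∈ (algebraMap Q S).range := by
      intro z hz hzr
      rw [← hcen, Subring.mem_center_iff]
      intro x
      have hx : x ∈ Submodule.span Q (R : Set S) := by rw [hspan]; trivial
      induction hx using Submodule.span_induction with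
      | mem x hx => exact (hzr x hx).symm
      | zero => simp
      | add x y _ _ hx hy => rw [add_mul, mul_add, hx, hy]
      | smul a x _ hx => rw [smul_mul_assoc, mul_smul_comm, hx]
    refine ⟨?_, hcent, ?_, hspan⟩
    · intro z w hz hw hzr hwr hzw
      obtain ⟨a, rfl⟩ := hcent z hz hzr
      obtain ⟨b, rfl⟩ := hcent w hw hwr
      rw [← map_mul, map_eq_zero_iff _ hinj, mul_eq_zero] at hzw
      simpa [map_eq_zero_iff _ hinj] using hzw
    · intro q
      obtain ⟨k, hk0, hk, hqk⟩ := aux_frac hcen h q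
      exact ⟨_, _, hqk, hk, fun r _ => Algebra.commutes _ r, fun r _ => Algebra.commutes _ r,
        by simpa [map_eq_zero_iff _ hinj] using hk0, by rw [map_mul]⟩
  · rintro ⟨-, hcent, hfrac, hspan⟩
    have key (x : S) : ∃ k : Q, k ≠ 0 ∧ algebraMap Q S k ∈ R ∧ algebraMap Q S k * x ∈ R := by
      have hx : x ∈ Submodule.span Q (R : Set S) := by rw [hspan]; trivial
      induction hx using Submodule.span_induction with
      | mem x hx => exact ⟨1, one_ne_zero, by simp [R.one_mem], by simpa using hx⟩
      | zero => exact ⟨1, one_ne_zero, by simp [R.one_mem], by simp [R.zero_mem]⟩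
      | add x y _ _ hx hy =>
        obtain ⟨k, hk0, hk, hkx⟩ := hx
        obtain ⟨l, hl0, hl, hly⟩ := hy
        refine ⟨k * l, mul_ne_zero hk0 hl0, by rw [map_mul]; exact R.mul_mem hk hl, ?_⟩
        have e : algebraMap Q S (k * l) * (x + y) = algebraMap Q S l * (algebraMap Q S k * x) +
            algebraMap Q S k * (algebraMap Q S l * y) := by
          rw [mul_add, ← mul_assoc, ← mul_assoc, ← map_mul, ← map_mul, mul_comm l k]
        rw [e]
        exact R.add_mem (R.mul_mem hl hkx) (R.mul_mem hk hly)
      | smul a x _ hx =>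
        obtain ⟨k, hk0, hk, hkx⟩ := hx
        obtain ⟨z, w, hz, hw, -, hwr, hw0, e⟩ := hfrac a
        obtain ⟨l, rfl⟩ := hcent w hw hwr
        refine ⟨l * k, mul_ne_zero (by rintro rfl; simp at hw0) hk0,
          by rw [map_mul]; exact R.mul_mem hw hk, ?_⟩
        have e : algebraMap Q S (l * k) * (a • x) = z * (algebraMap Q S k * x) := by
          rw [← e, Algebra.smul_def, ← mul_assoc, ← mul_assoc, ← map_mul, ← map_mul, ← map_mul]
          congr 2
          ring
        rw [e]
        exact R.mul_mem hz hkx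
    intro x
    obtain ⟨k, hk0, hk, hkx⟩ := key x
    have e1 : algebraMap Q S k * algebraMap Q S k⁻¹ = 1 := by
      rw [← map_mul, mul_inv_cancel₀ hk0, map_one]
    have e2 : algebraMap Q S k⁻¹ * algebraMap Q S k = 1 := by
      rw [← map_mul, inv_mul_cancel₀ hk0, map_one]
    have e3 : x = algebraMap Q S k⁻¹ * (algebraMap Q S k * x) := by
      rw [← mul_assoc, e2, one_mul]
    exact ⟨⟨_, _, _, hkx, hk, e1, e2, by rw [← Algebra.commutes]; exact e3⟩,
      ⟨_, _, _, hk, hkx, e1, e2, e3⟩⟩
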